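/- (Approximate Magic Square anticommutation.) There is a universal constant C > 0 with the following property. Let H_A, H_B be finite-dimensional complex Hilbert spaces and ψ ∈ H_A ⊗ H_B a unit vector. Let F₀, F₁, F₂, G₀, G₁, G₂, H₀, H₁, H₂ be self-adjoint operators on H_A squaring to the identity, and F₀', F₁', F₂', G₀', G₁', G₂', H₀', H₁', H₂' be self-adjoint operators on H_B squaring to the identity. Let δ ≥ 0 and suppose: ‖(X ⊗ 1)ψ − (1 ⊗ X')ψ‖ ≤ δ for each of the nine corresponding pairs (X, X'); ‖(F₀F₁F₂ ⊗ 1)ψ − ψ‖ ≤ δ; ‖(G₀G₁G₂ ⊗ 1)ψ − ψ‖ ≤ δ; ‖(H₀H₁H₂ ⊗ 1)ψ − ψ‖ ≤ δ; ‖(F₀G₂H₀ ⊗ 1)ψ − ψ‖ ≤ δ; ‖(F₂G₀H₁ ⊗ 1)ψ − ψ‖ ≤ δ; and ‖(F₁G₁H₂ ⊗ 1)ψ + ψ‖ ≤ δ. Then ‖((F₀G₀ + G₀F₀) ⊗ 1)ψ‖ ≤ Cδ and ‖((F₂G₂ + G₂F₂) ⊗ 1)ψ‖ ≤ Cδ.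 -/

import Mathlib

open Matrix Kronecker

/-- The action of a matrix on a vector of the corresponding Euclidean (Hilbert) space. -/
noncomputable def mApply {ι κ : Type*} [Fintype ι] (A : Matrix κ ι ℂ) (v : EuclideanSpace ℂ ι) :
    EuclideanSpace ℂ κ :=
  (WithLp.equiv 2 (κ → ℂ)).symm (A.mulVec (WithLp.equiv 2 (ι → ℂ) v))


section Helpers

noncomputable def opA {m n : ℕ} (X : Matrix (Fin m) (Fin m) ℂ)
    (v : EuclideanSpace ℂ (Fin m × Fin n)) : EuclideanSpace ℂ (Fin m × Fin n) :=
  mApply (X ⊗ₖ (1 : Matrix (Fin n) (Fin n) ℂ)) v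

noncomputable def opB {m n : ℕ} (X : Matrix (Fin n) (Fin n) ℂ)
    (v : EuclideanSpace ℂ (Fin m × Fin n)) : EuclideanSpace ℂ (Fin m × Fin n) :=
  mApply ((1 : Matrix (Fin m) (Fin m) ℂ) ⊗ₖ X) v

theorem mApply_mul {ι : Type*} [Fintype ι] (A B : Matrix ι ι ℂ) (v : EuclideanSpace ℂ ι) :
    mApply (A * B) v = mApply A (mApply B v) := by
  simp [mApply, Matrix.mulVec_mulVec]

theorem mApply_one {ι : Type*} [Fintype ι] [DecidableEq ι] (v : EuclideanSpace ℂ ι) :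
    mApply 1 v = v := by
  simp [mApply]

theorem mApply_sub {ι : Type*} [Fintype ι] (A : Matrix ι ι ℂ) (u v : EuclideanSpace ℂ ι) :
    mApply A (u - v) = mApply A u - mApply A v := by
  simp [mApply, Matrix.mulVec_sub]

theorem mApply_neg {ι : Type*} [Fintype ι] (A : Matrix ι ι ℂ) (v : EuclideanSpace ℂ ι) :
    mApply A (- v) = - mApply A v := by
  simp [mApply, Matrix.mulVec_neg]

theorem mApply_add_mat {ι : Type*} [Fintype ι] (A B : Matrix ι ι ℂ) (v : EuclideanSpace ℂ ι) :
    mApply (A + B) v = mApply A v + mApply B v := by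
  simp [mApply, Matrix.add_mulVec]

theorem mApply_norm {ι : Type*} [Fintype ι] [DecidableEq ι] (A : Matrix ι ι ℂ)
    (hA : A.IsHermitian) (h1 : A * A = 1) (v : EuclideanSpace ℂ ι) :
    ‖mApply A v‖ = ‖v‖ := by
  have h : inner ℂ (mApply A v) (mApply A v) = inner ℂ v v := by
    simp only [EuclideanSpace.inner_eq_star_dotProduct, mApply, WithLp.equiv_apply,
      WithLp.equiv_symm_apply]
    rw [Matrix.star_mulVec, hA.eq, dotProduct_comm, ← Matrix.dotProduct_mulVec,
      Matrix.mulVec_mulVec, h1, Matrix.one_mulVec, dotProduct_comm]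
  rw [inner_self_eq_norm_sq_to_K, inner_self_eq_norm_sq_to_K] at h
  have h2 : ‖mApply A v‖ ^ 2 = ‖v‖ ^ 2 := by exact_mod_cast h
  exact (sq_eq_sq₀ (norm_nonneg _) (norm_nonneg _)).1 h2

variable {m n : ℕ}

theorem opA_mul (X Y : Matrix (Fin m) (Fin m) ℂ) (v : EuclideanSpace ℂ (Fin m × Fin n)) :
    opA (X * Y) v = opA X (opA Y v) := by
  unfold opA
  rw [← mApply_mul, ← Matrix.mul_kronecker_mul, one_mul]

theorem opA_opB (X : Matrix (Fin m) (Fin m) ℂ) (Y : Matrix (Fin n) (Fin n) ℂ)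
    (v : EuclideanSpace ℂ (Fin m × Fin n)) :
    opA X (opB Y v) = opB Y (opA X v) := by
  unfold opA opB
  rw [← mApply_mul, ← mApply_mul, ← Matrix.mul_kronecker_mul, ← Matrix.mul_kronecker_mul]
  simp

structure Good (ψ : EuclideanSpace ℂ (Fin m × Fin n)) (δ : ℝ)
    (X : Matrix (Fin m) (Fin m) ℂ) (X' : Matrix (Fin n) (Fin n) ℂ) : Prop where
  ia : ∀ u v : EuclideanSpace ℂ (Fin m × Fin n), dist (opA X u) (opA X v) = dist u v
  ib : ∀ u v : EuclideanSpace ℂ (Fin m × Fin n), dist (opB X' u) (opB X' v) = dist u v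
  sa : ∀ v : EuclideanSpace ℂ (Fin m × Fin n), opA X (opA X v) = v
  sb : ∀ v : EuclideanSpace ℂ (Fin m × Fin n), opB X' (opB X' v) = v
  cl : dist (opA X ψ) (opB X' ψ) ≤ δ

theorem good_mk {ψ : EuclideanSpace ℂ (Fin m × Fin n)} {δ : ℝ}
    {X : Matrix (Fin m) (Fin m) ℂ} {X' : Matrix (Fin n) (Fin n) ℂ}
    (h : X.IsHermitian ∧ X * X = 1) (h' : X'.IsHermitian ∧ X' * X' = 1)
    (hc : ‖mApply (X ⊗ₖ (1 : Matrix (Fin n) (Fin n) ℂ)) ψ -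
            mApply ((1 : Matrix (Fin m) (Fin m) ℂ) ⊗ₖ X') ψ‖ ≤ δ) : Good ψ δ X X' := by
  have s1 : (X ⊗ₖ (1 : Matrix (Fin n) (Fin n) ℂ)) * (X ⊗ₖ (1 : Matrix (Fin n) (Fin n) ℂ)) = 1 := by
    rw [← Matrix.mul_kronecker_mul, h.2]; simp
  have s2 : ((1 : Matrix (Fin m) (Fin m) ℂ) ⊗ₖ X') * ((1 : Matrix (Fin m) (Fin m) ℂ) ⊗ₖ X') = 1 := by
    rw [← Matrix.mul_kronecker_mul, h'.2]; simp
  have a1 : (X ⊗ₖ (1 : Matrix (Fin n) (Fin n) ℂ)).IsHermitian := by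
    unfold Matrix.IsHermitian
    rw [Matrix.conjTranspose_kronecker, h.1.eq]; simp
  have a2 : ((1 : Matrix (Fin m) (Fin m) ℂ) ⊗ₖ X').IsHermitian := by
    unfold Matrix.IsHermitian
    rw [Matrix.conjTranspose_kronecker, h'.1.eq]; simp
  refine ⟨fun u v => ?_, fun u v => ?_, fun v => ?_, fun v => ?_, ?_⟩
  · rw [dist_eq_norm, dist_eq_norm, opA, opA, ← mApply_sub, mApply_norm _ a1 s1]
  · rw [dist_eq_norm, dist_eq_norm, opB, opB, ← mApply_sub, mApply_norm _ a2 s2]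
  · rw [opA, opA, ← mApply_mul, s1, mApply_one]
  · rw [opB, opB, ← mApply_mul, s2, mApply_one]
  · rw [dist_eq_norm]; exact hc

variable {ψ : EuclideanSpace ℂ (Fin m × Fin n)} {δ : ℝ}
  {X Y Z : Matrix (Fin m) (Fin m) ℂ} {X' Y' Z' : Matrix (Fin n) (Fin n) ℂ}

theorem opA_neg (v : EuclideanSpace ℂ (Fin m × Fin n)) : opA X (-v) = - opA X v := mApply_neg _ _
theorem opB_neg (v : EuclideanSpace ℂ (Fin m × Fin n)) : opB X' (-v) = - opB X' v := mApply_neg _ _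

theorem ruleL (hX : Good ψ δ X X') (hY : Good ψ δ Y Y') (hZ : Good ψ δ Z Z') {c : ℝ}
    {φ : EuclideanSpace ℂ (Fin m × Fin n)} (hφ : dist (opA Z φ) (opB Z' φ) ≤ δ)
    (h : dist (opA X (opA Y (opA Z ψ))) φ ≤ c) :
    dist (opA X (opA Y ψ)) (opA Z φ) ≤ c + 2 * δ := by
  have h1 : dist (opA X (opA Y (opA Z ψ))) (opA X (opA Y (opB Z' ψ))) ≤ δ := by
    rw [hX.ia, hY.ia]; exact hZ.cl
  rw [opA_opB, opA_opB] at h1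
  have h2 : dist (opA X (opA Y ψ)) (opB Z' φ) = dist (opB Z' (opA X (opA Y ψ))) φ := by
    rw [← hZ.ib, hZ.sb]
  have h3 := dist_triangle_left (opB Z' (opA X (opA Y ψ))) φ (opA X (opA Y (opA Z ψ)))
  have h4 := dist_triangle_right (opA X (opA Y ψ)) (opA Z φ) (opB Z' φ)
  linarith

theorem ruleC (hZ : Good ψ δ Z Z') {c : ℝ}
    (h : dist (opA X (opA Y ψ)) (opA Z ψ) ≤ c) :
    dist (opA Z (opA X (opA Y ψ))) ψ ≤ c := by
  rw [← hZ.ia, hZ.sa]; exact h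

theorem ruleR (hX : Good ψ δ X X') (hY : Good ψ δ Y Y') (hZ : Good ψ δ Z Z') {c : ℝ}
    (h : dist (opA X (opA Y (opA Z ψ))) ψ ≤ c) :
    dist (opA Z (opA Y (opA X ψ))) ψ ≤ c := by
  rw [← hZ.ia, hZ.sa, ← hY.ia, hY.sa, ← hX.ia, hX.sa, dist_comm]; exact h

theorem rot2 (hX : Good ψ δ X X') (hY : Good ψ δ Y Y') (hZ : Good ψ δ Z Z') {c : ℝ}
    (h : dist (opA X (opA Y (opA Z ψ))) ψ ≤ c) :
    dist (opA Z (opA X ψ)) (opA Y ψ) ≤ c + 4 * δ := by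
  have h1 := ruleL hZ hX hY hY.cl (ruleC hZ (ruleL hX hY hZ hZ.cl h))
  linarith

theorem rot2' (hX : Good ψ δ X X') (hY : Good ψ δ Y Y') (hZ : Good ψ δ Z Z') {c : ℝ}
    (h : dist (opA X (opA Y (opA Z ψ))) ψ ≤ c) :
    dist (opA X (opA Z ψ)) (opA Y ψ) ≤ c + 4 * δ :=
  rot2 hZ hY hX (ruleR hX hY hZ h)

theorem core {F0 F1 F2 G0 G1 G2 H0 H1 H2 : Matrix (Fin m) (Fin m) ℂ}
    {F0' F1' F2' G0' G1' G2' H0' : Matrix (Fin n) (Fin n) ℂ} {K : ℝ}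
    (f0 : Good ψ δ F0 F0') (f1 : Good ψ δ F1 F1') (f2 : Good ψ δ F2 F2')
    (g0 : Good ψ δ G0 G0') (g1 : Good ψ δ G1 G1') (g2 : Good ψ δ G2 G2')
    (h0 : Good ψ δ H0 H0')
    (r1 : dist (opA F0 (opA G2 ψ)) (opA H0 ψ) ≤ K)
    (r2 : dist (opA F2 (opA G0 ψ)) (opA H1 ψ) ≤ K)
    (r3 : dist (opA H0 (opA H1 ψ)) (opA H2 ψ) ≤ K)
    (r4 : dist (opA F1 (opA G1 ψ)) (- opA H2 ψ) ≤ K)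
    (r5 : dist (opA F0 (opA F2 ψ)) (opA F1 ψ) ≤ K)
    (r6 : dist (opA G2 (opA G0 ψ)) (opA G1 ψ) ≤ K) :
    ‖opA F2 (opA G2 ψ) + opA G2 (opA F2 ψ)‖ ≤ 6 * K + 6 * δ := by
  have a1 : dist (opA H0 (opA F2 (opA G0 ψ))) (opA H0 (opA H1 ψ)) ≤ K := by rw [h0.ia]; exact r2
  have a2 : dist (opA H0 (opA F2 (opA G0 ψ))) (opA H0 (opA F2 (opB G0' ψ))) ≤ δ := by
    rw [h0.ia, f2.ia]; exact g0.cl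
  have a3 : dist (opB G0' (opA H0 (opA F2 ψ))) (opB G0' (opA H0 (opB F2' ψ))) ≤ δ := by
    rw [g0.ib, h0.ia]; exact f2.cl
  have a4 : dist (opB G0' (opB F2' (opA F0 (opA G2 ψ)))) (opB G0' (opB F2' (opA H0 ψ))) ≤ K := by
    rw [g0.ib, f2.ib]; exact r1
  have a5 : dist (opB G0' (opA F0 (opA G2 (opA F2 ψ)))) (opB G0' (opA F0 (opA G2 (opB F2' ψ)))) ≤ δ := by
    rw [g0.ib, f0.ia, g2.ia]; exact f2.cl
  have b1 : dist (opA F1 (opA G1 ψ)) (opA F1 (opB G1' ψ)) ≤ δ := by rw [f1.ia]; exact g1.cl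
  have b2 : dist (opB G1' (opA F0 (opA F2 ψ))) (opB G1' (opA F1 ψ)) ≤ K := by rw [g1.ib]; exact r5
  have b3 : dist (opA F0 (opA F2 (opA G1 ψ))) (opA F0 (opA F2 (opB G1' ψ))) ≤ δ := by
    rw [f0.ia, f2.ia]; exact g1.cl
  have b4 : dist (opA F0 (opA F2 (opA G2 (opA G0 ψ)))) (opA F0 (opA F2 (opA G1 ψ))) ≤ K := by
    rw [f0.ia, f2.ia]; exact r6
  have b5 : dist (opA F0 (opA F2 (opA G2 (opA G0 ψ)))) (opA F0 (opA F2 (opA G2 (opB G0' ψ)))) ≤ δ := by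
    rw [f0.ia, f2.ia, g2.ia]; exact g0.cl
  simp only [opA_opB] at a2 a3 a5 b1 b3 b5
  have e : ‖opA F2 (opA G2 ψ) + opA G2 (opA F2 ψ)‖ =
      dist (opB G0' (opA F0 (opA G2 (opA F2 ψ)))) (- opB G0' (opA F0 (opA F2 (opA G2 ψ)))) := by
    rw [← opB_neg, ← opA_neg, g0.ib, f0.ia, dist_eq_norm, sub_neg_eq_add, add_comm]
  rw [e]
  simp only [dist_eq_norm] at *
  generalize opB G0' (opA F0 (opA G2 (opA F2 ψ))) = P at *
  generalize opB G0' (opA F0 (opA F2 (opA G2 ψ))) = Q at *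
  have tri : ∀ {u v w : EuclideanSpace ℂ (Fin m × Fin n)} {c d : ℝ}, ‖u - v‖ ≤ c → ‖v - w‖ ≤ d →
      ‖u - w‖ ≤ c + d := fun h h' => (norm_sub_le_norm_sub_add_norm_sub _ _ _).trans (add_le_add h h')
  have sy : ∀ {u v : EuclideanSpace ℂ (Fin m × Fin n)} {c : ℝ}, ‖u - v‖ ≤ c → ‖v - u‖ ≤ c :=
    fun h => by rw [norm_sub_rev]; exact h
  have A := tri a5 (tri a4 (tri (sy a3) (tri (sy a2) (tri a1 r3))))
  have B := tri (sy b5) (tri b4 (tri b3 (tri b2 (tri (sy b1) r4))))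
  have B' : ‖opA H2 ψ - -Q‖ ≤ δ + (K + (δ + (K + (δ + K)))) := by
    have : opA H2 ψ - -Q = Q - - opA H2 ψ := by abel
    rw [this]; exact B
  have := tri A B'
  linarith

end Helpers

/-- Approximate Magic Square anticommutation.
`F i`, `G i`, `H i` (for `i = 0, 1, 2`) are the binary observables `F₀, F₁, F₂`,
`G₀, G₁, G₂`, `H₀, H₁, H₂` on `H_A = ℂ^{nA}`, and primed ones on `H_B = ℂ^{nB}`. -/
theorem stmt_18 :
    ∃ C : ℝ, 0 < C ∧
      ∀ (nA nB : ℕ) (ψ : EuclideanSpace ℂ (Fin nA × Fin nB)), ‖ψ‖ = 1 →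
      ∀ (F G H : Fin 3 → Matrix (Fin nA) (Fin nA) ℂ)
        (F' G' H' : Fin 3 → Matrix (Fin nB) (Fin nB) ℂ),
        (∀ i, (F i).IsHermitian ∧ F i * F i = 1) →
        (∀ i, (G i).IsHermitian ∧ G i * G i = 1) →
        (∀ i, (H i).IsHermitian ∧ H i * H i = 1) →
        (∀ i, (F' i).IsHermitian ∧ F' i * F' i = 1) →
        (∀ i, (G' i).IsHermitian ∧ G' i * G' i = 1) →
        (∀ i, (H' i).IsHermitian ∧ H' i * H' i = 1) →
      ∀ (δ : ℝ), 0 ≤ δ →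
        (∀ i, ‖mApply (F i ⊗ₖ (1 : Matrix (Fin nB) (Fin nB) ℂ)) ψ -
            mApply ((1 : Matrix (Fin nA) (Fin nA) ℂ) ⊗ₖ F' i) ψ‖ ≤ δ) →
        (∀ i, ‖mApply (G i ⊗ₖ (1 : Matrix (Fin nB) (Fin nB) ℂ)) ψ -
            mApply ((1 : Matrix (Fin nA) (Fin nA) ℂ) ⊗ₖ G' i) ψ‖ ≤ δ) →
        (∀ i, ‖mApply (H i ⊗ₖ (1 : Matrix (Fin nB) (Fin nB) ℂ)) ψ -
            mApply ((1 : Matrix (Fin nA) (Fin nA) ℂ) ⊗ₖ H' i) ψ‖ ≤ δ) →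
        ‖mApply ((F 0 * F 1 * F 2) ⊗ₖ (1 : Matrix (Fin nB) (Fin nB) ℂ)) ψ - ψ‖ ≤ δ →
        ‖mApply ((G 0 * G 1 * G 2) ⊗ₖ (1 : Matrix (Fin nB) (Fin nB) ℂ)) ψ - ψ‖ ≤ δ →
        ‖mApply ((H 0 * H 1 * H 2) ⊗ₖ (1 : Matrix (Fin nB) (Fin nB) ℂ)) ψ - ψ‖ ≤ δ →
        ‖mApply ((F 0 * G 2 * H 0) ⊗ₖ (1 : Matrix (Fin nB) (Fin nB) ℂ)) ψ - ψ‖ ≤ δ →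
        ‖mApply ((F 2 * G 0 * H 1) ⊗ₖ (1 : Matrix (Fin nB) (Fin nB) ℂ)) ψ - ψ‖ ≤ δ →
        ‖mApply ((F 1 * G 1 * H 2) ⊗ₖ (1 : Matrix (Fin nB) (Fin nB) ℂ)) ψ + ψ‖ ≤ δ →
        ‖mApply ((F 0 * G 0 + G 0 * F 0) ⊗ₖ (1 : Matrix (Fin nB) (Fin nB) ℂ)) ψ‖ ≤ C * δ ∧
        ‖mApply ((F 2 * G 2 + G 2 * F 2) ⊗ₖ (1 : Matrix (Fin nB) (Fin nB) ℂ)) ψ‖ ≤ C * δ := by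
  refine ⟨48, by norm_num, ?_⟩
  intro nA nB ψ _ F G H F' G' H' hF hG hH hF' hG' hH' δ hδ cF cG cH e1 e2 e3 e4 e5 e6
  have f := fun i => good_mk (hF i) (hF' i) (cF i)
  have g := fun i => good_mk (hG i) (hG' i) (cG i)
  have h := fun i => good_mk (hH i) (hH' i) (cH i)
  have key : ∀ (X Y Z : Matrix (Fin nA) (Fin nA) ℂ),
      mApply ((X * Y * Z) ⊗ₖ (1 : Matrix (Fin nB) (Fin nB) ℂ)) ψ = opA X (opA Y (opA Z ψ)) := by
    intro X Y Z
    rw [← opA_mul, ← opA_mul]; rfl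
  have key2 : ∀ (X Y : Matrix (Fin nA) (Fin nA) ℂ),
      mApply ((X * Y + Y * X) ⊗ₖ (1 : Matrix (Fin nB) (Fin nB) ℂ)) ψ =
        opA X (opA Y ψ) + opA Y (opA X ψ) := by
    intro X Y
    rw [← opA_mul, ← opA_mul, Matrix.add_kronecker, mApply_add_mat]; rfl
  rw [key, ← dist_eq_norm] at e1 e2 e3 e4 e5
  rw [key, ← sub_neg_eq_add, ← dist_eq_norm] at e6
  have r1 := ruleL (f 0) (g 2) (h 0) (h 0).cl e4
  have r2 := ruleL (f 2) (g 0) (h 1) (h 1).cl e5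
  have r4 := ruleL (f 1) (g 1) (h 2)
    (by rw [opA_neg, opB_neg, dist_neg_neg]; exact (h 2).cl) e6
  rw [opA_neg] at r4
  have r3 := ruleL (h 0) (h 1) (h 2) (h 2).cl e3
  have r3' := ruleL (h 1) (h 0) (h 2) (h 2).cl
    (ruleC (h 1) (rot2' (h 0) (h 1) (h 2) e3))
  have r5 := rot2' (f 0) (f 1) (f 2) e1
  have r5' := rot2 (f 0) (f 1) (f 2) e1
  have r6 := rot2 (g 0) (g 1) (g 2) e2
  have r6' := rot2' (g 0) (g 1) (g 2) e2
  rw [key2, key2]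
  constructor
  · have := core (K := 7 * δ) (f 2) (f 1) (f 0) (g 2) (g 1) (g 0) (h 1)
      (by linarith) (r1.trans (by linarith)) (r3'.trans (by linarith)) (r4.trans (by linarith))
      (r5'.trans (by linarith)) (r6'.trans (by linarith))
    linarith
  · have := core (K := 7 * δ) (f 0) (f 1) (f 2) (g 0) (g 1) (g 2) (h 0)
      (by linarith) (r2.trans (by linarith)) (r3.trans (by linarith)) (r4.trans (by linarith))
      (r5.trans (by linarith)) (r6.trans (by linarith))
    linarith
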